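/- arXiv:2401.13698 — 3 statements merged into one kernel-verified Lean document; each statement's English description precedes it below -/
import Mathlib

section
/- Let n ≥ 2 and let G be a real symmetric n×n matrix which is indecomposable, has G i i = 1 for every i, G i j ≤ 0 for all i ≠ j, is positive semidefinite (xᵀ G x ≥ 0 for all x), and is singular (there exists x ≠ 0 with G *ᵥ x = 0). Then the kernel of G is one-dimensional and is spanned by a vector all of whose coordinates are positive, and for every nonempty proper subset S of the index set the principal submatrix of G with rows and columns in S is positive definite. -/
open Matrix

/-- A real square matrix indexed by `ι` is *indecomposable* if there is no subset `S` of `ι`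
with `S` nonempty and `S ≠ univ` such that `M i j = 0` whenever `i ∈ S` and `j ∉ S`. -/
def Matrix.Indecomposable {ι : Type*} (M : Matrix ι ι ℝ) : Prop :=
  ¬ ∃ S : Set ι, S.Nonempty ∧ S ≠ Set.univ ∧ ∀ i ∈ S, ∀ j ∉ S, M i j = 0

/-!
Replacing `x` by `|x|` does not increase the quadratic form `x ⬝ᵥ G *ᵥ x`, because the off-diagonal
entries are nonpositive. So an isotropic vector `x ≠ 0` of the positive semidefinite matrix `G`
gives a nonnegative vector `|x|` in the kernel of `G`, and indecomposability forbids `|x|`, hence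
`x`, to have a zero coordinate. Two independent kernel vectors would have a nonzero combination
with a zero coordinate, and a nonzero isotropic vector of a proper principal submatrix would extend
by zero to such a vector.
-/

theorem abs_dotProduct_mulVec_abs_le {ι R : Type*} [Fintype ι] [CommRing R] [LinearOrder R]
    [IsStrictOrderedRing R] {A : Matrix ι ι R} (hoff : ∀ i j, i ≠ j → A i j ≤ 0) (x : ι → R) :
    |x| ⬝ᵥ A *ᵥ |x| ≤ x ⬝ᵥ A *ᵥ x := by
  simp only [dotProduct, mulVec, Finset.mul_sum, Pi.abs_apply]
  refine Finset.sum_le_sum fun i _ ↦ Finset.sum_le_sum fun j _ ↦ ?_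
  rcases eq_or_ne i j with rfl | hij
  · exact le_of_eq (by linear_combination A i i * abs_mul_abs_self (x i))
  · calc |x i| * (A i j * |x j|) = A i j * |x i * x j| := by rw [abs_mul]; ring
      _ ≤ A i j * (x i * x j) := mul_le_mul_of_nonpos_left (le_abs_self _) (hoff i j hij)
      _ = x i * (A i j * x j) := by ring

section Indecomposable

variable {ι : Type*} {G : Matrix ι ι ℝ}

theorem pos_of_indecomposable_of_mulVec_nonneg [Fintype ι] (hind : G.Indecomposable)
    (hoff : ∀ i j, i ≠ j → G i j ≤ 0) {v : ι → ℝ} (hv : 0 ≤ v) (hv_ne : v ≠ 0)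
    (hGv : 0 ≤ G *ᵥ v) (i : ι) : 0 < v i := by
  refine (hv i).lt_of_ne' fun hi ↦ hind ⟨{k | v k = 0}, ⟨i, hi⟩, ?_, fun a ha b hb ↦ ?_⟩
  · exact fun h_univ ↦ hv_ne (funext fun k ↦ Set.eq_univ_iff_forall.1 h_univ k)
  have terms_nonpos : ∀ j ∈ Finset.univ, G a j * v j ≤ 0 := by
    intro j _
    rcases eq_or_ne a j with rfl | haj
    · exact (mul_eq_zero_of_right _ ha).le
    · exact mul_nonpos_of_nonpos_of_nonneg (hoff a j haj) (hv j)
  have sum_eq_zero : ∑ j, G a j * v j = 0 :=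
    (Finset.sum_nonpos terms_nonpos).antisymm (hGv a)
  have term_eq_zero : G a b * v b = 0 :=
    (Finset.sum_eq_zero_iff_of_nonpos terms_nonpos).1 sum_eq_zero b (Finset.mem_univ b)
  exact (mul_eq_zero.1 term_eq_zero).resolve_right hb

theorem mulVec_abs_eq_zero_of_dotProduct_mulVec_eq_zero [Fintype ι] (hG : G.PosSemidef)
    (hoff : ∀ i j, i ≠ j → G i j ≤ 0) {x : ι → ℝ} (hx : x ⬝ᵥ G *ᵥ x = 0) : G *ᵥ |x| = 0 :=
  (hG.dotProduct_mulVec_zero_iff |x|).1 <|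
    ((abs_dotProduct_mulVec_abs_le hoff x).trans hx.le).antisymm (hG.dotProduct_mulVec_nonneg |x|)

theorem abs_pos_of_dotProduct_mulVec_eq_zero [Fintype ι] (hG : G.PosSemidef)
    (hind : G.Indecomposable) (hoff : ∀ i j, i ≠ j → G i j ≤ 0) {x : ι → ℝ} (hx_ne : x ≠ 0)
    (hx : x ⬝ᵥ G *ᵥ x = 0) (i : ι) : 0 < |x i| :=
  pos_of_indecomposable_of_mulVec_nonneg hind hoff (abs_nonneg x) (by simpa using hx_ne)
    (mulVec_abs_eq_zero_of_dotProduct_mulVec_eq_zero hG hoff hx).ge i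

theorem exists_eq_smul_of_mulVec_eq_zero [Fintype ι] (hG : G.PosSemidef)
    (hind : G.Indecomposable) (hoff : ∀ i j, i ≠ j → G i j ≤ 0) {v w : ι → ℝ} (hv_ne : v ≠ 0)
    (hv : G *ᵥ v = 0) (hw : G *ᵥ w = 0) : ∃ c : ℝ, w = c • v := by
  obtain ⟨i, hi : v i ≠ 0⟩ := Function.ne_iff.1 hv_ne
  refine ⟨w i / v i, by_contra fun h_ne ↦ ?_⟩
  have h_ker : G *ᵥ (w - (w i / v i) • v) = 0 := by
    rw [mulVec_sub, mulVec_smul, hv, hw, smul_zero, sub_zero]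
  have h_pos :=
    abs_pos_of_dotProduct_mulVec_eq_zero hG hind hoff (sub_ne_zero.2 h_ne) (by simp [h_ker]) i
  simp [hi] at h_pos

theorem posDef_submatrix_of_not_surjective {κ : Type*} [Finite ι] (hG : G.PosSemidef)
    (hind : G.Indecomposable) (hoff : ∀ i j, i ≠ j → G i j ≤ 0) {e : κ → ι}
    (he : Function.Injective e) (he_surj : ¬ Function.Surjective e) :
    (G.submatrix e e).PosDef := by
  have := Fintype.ofFinite ι
  obtain ⟨k, hk⟩ := not_forall.1 he_surj
  refine ⟨hG.isHermitian.submatrix e, fun y hy ↦ ?_⟩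
  set z : ι →₀ ℝ := y.mapDomain e
  have z_ne : (z : ι → ℝ) ≠ 0 := by
    simpa using (Finsupp.mapDomain_injective he).ne hy
  have z_apply : z k = 0 := Finsupp.mapDomain_of_notMem_range y k hk
  have form_pos : 0 < (z : ι → ℝ) ⬝ᵥ G *ᵥ z := by
    refine (hG.dotProduct_mulVec_nonneg z).lt_of_ne' fun hz ↦ ?_
    exact abs_pos.1 (abs_pos_of_dotProduct_mulVec_eq_zero hG hind hoff z_ne hz k) z_apply
  have form_eq : (z : ι → ℝ) ⬝ᵥ G *ᵥ z = z.sum fun i zi ↦ z.sum fun j zj ↦ zi * G i j * zj := by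
    simp [dotProduct, mulVec, Finsupp.sum_fintype, Finset.mul_sum, mul_assoc]
  simpa [form_eq, z, Finsupp.sum_mapDomain_index, add_mul, mul_add] using form_pos

theorem parabolic_gram_matrix_general [Fintype ι] (hG : G.PosSemidef)
    (hind : G.Indecomposable) (hoff : ∀ i j, i ≠ j → G i j ≤ 0) :
    ((∃ x : ι → ℝ, x ≠ 0 ∧ G *ᵥ x = 0) →
      ∃ v : ι → ℝ, (∀ i, 0 < v i) ∧ G *ᵥ v = 0 ∧
        ∀ w : ι → ℝ, G *ᵥ w = 0 → ∃ c : ℝ, w = c • v) ∧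
    ∀ S : Finset ι, S ≠ Finset.univ →
      (G.submatrix (Subtype.val : S → ι) (Subtype.val : S → ι)).PosDef := by
  refine ⟨fun ⟨x, hx_ne, hx⟩ ↦ ?_, fun S hS ↦ ?_⟩
  · have h_iso : x ⬝ᵥ G *ᵥ x = 0 := by rw [hx, dotProduct_zero]
    have h_ker : G *ᵥ |x| = 0 :=
      mulVec_abs_eq_zero_of_dotProduct_mulVec_eq_zero hG hoff h_iso
    exact ⟨|x|, abs_pos_of_dotProduct_mulVec_eq_zero hG hind hoff hx_ne h_iso, h_ker,
      fun w hw ↦ exists_eq_smul_of_mulVec_eq_zero hG hind hoff (by simpa using hx_ne) h_ker hw⟩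
  · refine posDef_submatrix_of_not_surjective hG hind hoff Subtype.val_injective fun h_surj ↦ hS ?_
    exact Finset.eq_univ_iff_forall.2 fun i ↦ by
      obtain ⟨j, rfl⟩ := h_surj i
      exact j.2

end Indecomposable

/-- An indecomposable, singular, positive semidefinite symmetric matrix with unit diagonal
and nonpositive off-diagonal entries has a one-dimensional kernel spanned by a positive
vector, and all proper principal submatrices are positive definite. -/
theorem parabolic_gram_matrix (n : ℕ) (hn : 2 ≤ n)
    (G : Matrix (Fin n) (Fin n) ℝ) (hsym : G.IsSymm) (hind : G.Indecomposable)
    (hdiag : ∀ i, G i i = 1) (hoff : ∀ i j, i ≠ j → G i j ≤ 0)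
    (hpsd : ∀ x : Fin n → ℝ, 0 ≤ x ⬝ᵥ G.mulVec x)
    (hsing : ∃ x : Fin n → ℝ, x ≠ 0 ∧ G.mulVec x = 0) :
    (∃ v : Fin n → ℝ, (∀ i, 0 < v i) ∧ G.mulVec v = 0 ∧
      ∀ w : Fin n → ℝ, G.mulVec w = 0 → ∃ c : ℝ, w = c • v) ∧
    (∀ S : Finset (Fin n), S.Nonempty → S ≠ Finset.univ →
      (G.submatrix (fun i : {i // i ∈ S} => (i : Fin n))
        (fun i : {i // i ∈ S} => (i : Fin n))).PosDef) := by
  have hG : G.PosSemidef := .of_dotProduct_mulVec_nonneg hsym hpsd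
  exact (parabolic_gram_matrix_general hG hind hoff).imp (· hsing) fun h S _ ↦ h S
end

section
/- Let d ≥ 2 and let B be the Minkowski bilinear form on ℝ^{d+1}. Let e, f ∈ ℝ^{d+1} be linearly independent vectors with B(e,e) = 1 and B(f,f) = 1. Then there exists x ∈ ℝ^{d+1} with B(x,x) = −1, x d > 0, B(x,e) = 0 and B(x,f) = 0 if and only if |B(e,f)| < 1. -/
/-- The Minkowski bilinear form of signature `(d,1)` on `ℝ^{d+1}`:
`B(x,y) = (∑_{i=0}^{d-1} x i * y i) - x d * y d`. -/
def minkowskiForm (d : ℕ) (x y : Fin (d + 1) → ℝ) : ℝ :=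
  (∑ i : Fin d, x i.castSucc * y i.castSucc) - x (Fin.last d) * y (Fin.last d)

/-!
The hyperplanes normal to the vectors of a subspace `W` share a point of `ℍ^d` iff `W` is positive
definite. If `x` is time-like and `w ⟂ x` with `w_d ≠ 0`, then `u = x_d w - w_d x` has vanishing
last coordinate, so `0 ≤ B(u,u) = x_d² B(w,w) + w_d² B(x,x)`, which forces `B(w,w) > 0`. Conversely,
if `W` is positive definite, then the component orthogonal to `W` of a time-like vector is again
time-like and can be rescaled to lie on the hyperboloid. For the plane spanned by two unit vectors
`e` and `f`, positive definiteness means positivity of the Gram determinant `1 - B(e,f)²`.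
-/

open LinearMap (BilinForm)
open Submodule (span)

section CommRing

variable {R M : Type*} [CommRing R] [AddCommGroup M] [Module R M] {B : BilinForm R M}
  {W : Submodule R M} {e f x : M}

theorem mem_orthogonal_span_pair_iff :
    x ∈ B.orthogonal (span R {e, f}) ↔ B e x = 0 ∧ B f x = 0 := by
  change span R {e, f} ≤ (B.flip x).ker ↔ _
  simp [Submodule.span_le, Set.insert_subset_iff]

section PartialOrder

variable [PartialOrder R]

theorem posDef_restrict_iff :
    (B.restrict W).toQuadraticMap.PosDef ↔ ∀ w ∈ W, w ≠ 0 → 0 < B w w := by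
  simp [QuadraticMap.PosDef]

theorem nondegenerate_of_posDef (hB : B.toQuadraticMap.PosDef) : B.Nondegenerate :=
  ⟨fun x hx ↦ hB.anisotropic x (hx x), fun x hx ↦ hB.anisotropic x (hx x)⟩

end PartialOrder

variable [LinearOrder R] [IsStrictOrderedRing R]

theorem posDef_restrict_of_mem_orthogonal_neg {φ : Module.Dual R M} (hB : B.IsRefl)
    (hφ : (B.restrict φ.ker).toQuadraticMap.PosDef) (hx : x ∈ B.orthogonal W)
    (hxx : B x x < 0) : (B.restrict W).toQuadraticMap.PosDef := by
  rw [posDef_restrict_iff]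
  intro w hw hw0
  rcases eq_or_ne (φ w) 0 with hφw | hφw
  · exact posDef_restrict_iff.1 hφ w hφw hw0
  have hwx : B w x = 0 := hx w hw
  have hxw : B x w = 0 := hB w x hwx
  set u := φ x • w - φ w • x
  have hu : 0 ≤ B u u := hφ.nonneg ⟨u, by simp [u, mul_comm]⟩
  have hBu : B u u = φ x ^ 2 * B w w + φ w ^ 2 * B x x := by simp [u, hwx, hxw]; ring
  have hneg : φ w ^ 2 * B x x < 0 := mul_neg_of_pos_of_neg (sq_pos_of_ne_zero hφw) hxx
  exact pos_of_mul_pos_right (by linarith : 0 < φ x ^ 2 * B w w) (sq_nonneg _)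

theorem posDef_restrict_span_pair_iff (hB : B.IsSymm) (hef : LinearIndependent R ![e, f]) :
    (B.restrict (span R {e, f})).toQuadraticMap.PosDef ↔
      0 < B e e ∧ B e f ^ 2 < B e e * B f f := by
  have hfe : B f e = B e f := hB.eq f e
  have hcomb (a b : R) : B (a • e + b • f) (a • e + b • f) =
      a ^ 2 * B e e + 2 * (a * b) * B e f + b ^ 2 * B f f := by
    simp [hfe]; ring
  rw [LinearIndependent.pair_iff] at hef
  rw [posDef_restrict_iff]
  constructor
  · intro hpos
    have he : 0 < B e e :=
      hpos e (Submodule.mem_span_of_mem (by simp)) (by rintro rfl; simpa using hef 1 0)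
    -- `v` is `B e e` times the component of `f` orthogonal to `e`.
    set v := (-B e f) • e + B e e • f
    have hv0 : v ≠ 0 := fun hv ↦ he.ne' (hef _ _ hv).2
    have hv : 0 < B v v := hpos v (Submodule.mem_span_pair.2 ⟨_, _, rfl⟩) hv0
    have hBv : B v v = B e e * (B e e * B f f - B e f ^ 2) := by rw [hcomb]; ring
    exact ⟨he, sub_pos.1 (pos_of_mul_pos_right (hBv ▸ hv) he.le)⟩
  · rintro ⟨he, hdet⟩ w hw hw0
    obtain ⟨a, b, rfl⟩ := Submodule.mem_span_pair.1 hw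
    have hsq : B e e * B (a • e + b • f) (a • e + b • f) =
        (a * B e e + b * B e f) ^ 2 + b ^ 2 * (B e e * B f f - B e f ^ 2) := by
      rw [hcomb]; ring
    refine pos_of_mul_pos_right (hsq ▸ ?_) he.le
    rcases eq_or_ne b 0 with rfl | hb
    · have ha : a ≠ 0 := by rintro rfl; simp at hw0
      simpa only [zero_mul, add_zero, zero_pow two_ne_zero] using
        sq_pos_of_ne_zero (mul_ne_zero ha he.ne')
    · exact add_pos_of_nonneg_of_pos (sq_nonneg _)
        (mul_pos (sq_pos_of_ne_zero hb) (sub_pos.2 hdet))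

end CommRing

section Field

variable {K V : Type*} [Field K] [AddCommGroup V] [Module K V] {B : BilinForm K V}
  {W : Submodule K V} {p : V}

theorem sup_orthogonal_eq_top_of_nondegenerate_restrict [FiniteDimensional K W] (hB : B.IsRefl)
    (hW : (B.restrict W).Nondegenerate) : W ⊔ B.orthogonal W = ⊤ := by
  refine Submodule.eq_top_iff'.2 fun p ↦ ?_
  set w := ((B.restrict W).toDual hW).symm (B p ∘ₗ W.subtype)
  have hw (v : W) : B w v = B p v := (B.restrict W).apply_toDual_symm_apply _ v
  have hpw : p - w ∈ B.orthogonal W := fun v hv ↦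
    hB _ _ (by rw [map_sub, LinearMap.sub_apply, hw ⟨v, hv⟩, sub_self])
  exact Submodule.mem_sup.2 ⟨w, w.2, p - w, hpw, add_sub_cancel _ _⟩

variable [LinearOrder K] [IsStrictOrderedRing K]

theorem exists_mem_orthogonal_neg [FiniteDimensional K W] (hB : B.IsRefl)
    (hW : (B.restrict W).toQuadraticMap.PosDef) (hp : B p p < 0) :
    ∃ x ∈ B.orthogonal W, B x x < 0 := by
  have hp_mem : p ∈ W ⊔ B.orthogonal W :=
    sup_orthogonal_eq_top_of_nondegenerate_restrict hB (nondegenerate_of_posDef hW) ▸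
      Submodule.mem_top
  obtain ⟨w, hw, x, hx, rfl⟩ := Submodule.mem_sup.1 hp_mem
  have hwx : B w x = 0 := hx w hw
  have hxw : B x w = 0 := hB w x hwx
  have hww : 0 ≤ B w w := hW.nonneg ⟨w, hw⟩
  have hsum : B (w + x) (w + x) = B w w + B x x := by simp [hwx, hxw]
  exact ⟨x, hx, by linarith⟩

theorem exists_mem_orthogonal_neg_iff_posDef_restrict [FiniteDimensional K W]
    {φ : Module.Dual K V} (hB : B.IsRefl) (hφ : (B.restrict φ.ker).toQuadraticMap.PosDef)
    (hp : B p p < 0) :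
    (∃ x ∈ B.orthogonal W, B x x < 0) ↔ (B.restrict W).toQuadraticMap.PosDef :=
  ⟨fun ⟨_, hx, hxx⟩ ↦ posDef_restrict_of_mem_orthogonal_neg hB hφ hx hxx,
    fun hW ↦ exists_mem_orthogonal_neg hB hW hp⟩

end Field

section Hyperboloid

variable {d : ℕ}

/-- The Minkowski form `minkowskiForm d` as a bundled bilinear form, which gives access to
orthogonal complements and restrictions to subspaces. -/
def minkowskiBilin (d : ℕ) : BilinForm ℝ (Fin (d + 1) → ℝ) :=
  LinearMap.mk₂ ℝ (minkowskiForm d)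
    (fun x y z ↦ by simp [minkowskiForm, add_mul, Finset.sum_add_distrib]; ring)
    (fun c x y ↦ by simp [minkowskiForm, mul_assoc, ← Finset.mul_sum, mul_sub])
    (fun x y z ↦ by simp [minkowskiForm, mul_add, Finset.sum_add_distrib]; ring)
    (fun c x y ↦ by simp [minkowskiForm, mul_left_comm, ← Finset.mul_sum, mul_sub])

@[simp]
theorem minkowskiBilin_apply (x y : Fin (d + 1) → ℝ) :
    minkowskiBilin d x y = minkowskiForm d x y :=
  rfl

/-- The hyperboloid model `ℍ^d` of hyperbolic space: the upper sheet of `B(x,x) = -1`. -/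
def hyperboloid (d : ℕ) : Set (Fin (d + 1) → ℝ) :=
  {x | minkowskiForm d x x = -1 ∧ 0 < x (Fin.last d)}

theorem isSymm_minkowskiBilin : (minkowskiBilin d).IsSymm :=
  ⟨fun x y ↦ by simp [minkowskiForm, mul_comm]⟩

theorem minkowskiBilin_single_last :
    minkowskiBilin d (Pi.single (Fin.last d) 1) (Pi.single (Fin.last d) 1) = -1 := by
  simp [minkowskiForm, Fin.castSucc_ne_last]

theorem posDef_minkowskiBilin_restrict_ker_proj_last :
    ((minkowskiBilin d).restrict
      (LinearMap.proj (φ := fun _ ↦ ℝ) (Fin.last d)).ker).toQuadraticMap.PosDef := by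
  rw [posDef_restrict_iff]
  intro v hv hv0
  have hlast : v (Fin.last d) = 0 := hv
  obtain ⟨i, hi⟩ : ∃ i : Fin d, v i.castSucc ≠ 0 := by
    by_contra! h
    exact hv0 (funext (Fin.lastCases hlast h))
  have hsum : 0 < ∑ i : Fin d, v i.castSucc * v i.castSucc :=
    Finset.sum_pos' (fun _ _ ↦ mul_self_nonneg _) ⟨i, Finset.mem_univ i, mul_self_pos.2 hi⟩
  simpa [minkowskiForm, hlast] using hsum

theorem last_ne_zero_of_minkowskiForm_neg {x : Fin (d + 1) → ℝ} (hx : minkowskiForm d x x < 0) :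
    x (Fin.last d) ≠ 0 := by
  intro hlast
  exact hx.not_ge (posDef_minkowskiBilin_restrict_ker_proj_last.nonneg ⟨x, hlast⟩)

theorem exists_smul_mem_hyperboloid {x : Fin (d + 1) → ℝ} (hx : minkowskiForm d x x < 0) :
    ∃ r : ℝ, r • x ∈ hyperboloid d := by
  wlog hlast : 0 < x (Fin.last d) generalizing x
  · have hneg : minkowskiForm d (-x) (-x) = minkowskiForm d x x := by simp [minkowskiForm]
    have hlast' : 0 < (-x) (Fin.last d) :=
      neg_pos.2 ((not_lt.1 hlast).lt_of_ne (last_ne_zero_of_minkowskiForm_neg hx))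
    obtain ⟨r, hr⟩ := this (hneg ▸ hx) hlast'
    exact ⟨-r, by rwa [neg_smul, ← smul_neg]⟩
  have hpos : 0 < -minkowskiForm d x x := neg_pos.2 hx
  refine ⟨(√(-minkowskiForm d x x))⁻¹, ?_, mul_pos (inv_pos.2 (Real.sqrt_pos.2 hpos)) hlast⟩
  rw [← minkowskiBilin_apply, LinearMap.map_smul₂, map_smul, minkowskiBilin_apply, smul_eq_mul,
    smul_eq_mul, ← mul_assoc, ← mul_inv, Real.mul_self_sqrt hpos.le, inv_neg,
    neg_mul, inv_mul_cancel₀ hx.ne]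

theorem exists_mem_hyperboloid_mem_orthogonal_iff (W : Submodule ℝ (Fin (d + 1) → ℝ)) :
    (∃ x ∈ hyperboloid d, x ∈ (minkowskiBilin d).orthogonal W) ↔
      ((minkowskiBilin d).restrict W).toQuadraticMap.PosDef := by
  have hneg : minkowskiBilin d (Pi.single (Fin.last d) 1) (Pi.single (Fin.last d) 1) < 0 := by
    rw [minkowskiBilin_single_last]; exact neg_one_lt_zero
  rw [← exists_mem_orthogonal_neg_iff_posDef_restrict isSymm_minkowskiBilin.isRefl
    posDef_minkowskiBilin_restrict_ker_proj_last hneg]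
  constructor
  · rintro ⟨x, hx, hxW⟩
    exact ⟨x, hxW, hx.1.trans_lt neg_one_lt_zero⟩
  · rintro ⟨x, hxW, hxx⟩
    obtain ⟨r, hr⟩ := exists_smul_mem_hyperboloid hxx
    exact ⟨r • x, hr, Submodule.smul_mem _ r hxW⟩

end Hyperboloid

/-- Two hyperplanes `H_e` and `H_f` of the hyperboloid model intersect in `ℍ^d`
if and only if `|B(e,f)| < 1`. -/
theorem hyperplanes_intersect_iff (d : ℕ) (hd : 2 ≤ d)
    (e f : Fin (d + 1) → ℝ) (hef : LinearIndependent ℝ ![e, f])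
    (he : minkowskiForm d e e = 1) (hf : minkowskiForm d f f = 1) :
    (∃ x : Fin (d + 1) → ℝ, minkowskiForm d x x = -1 ∧ 0 < x (Fin.last d) ∧
      minkowskiForm d x e = 0 ∧ minkowskiForm d x f = 0) ↔
    |minkowskiForm d e f| < 1 := by
  have hcomm (x y : Fin (d + 1) → ℝ) : minkowskiForm d x y = minkowskiForm d y x :=
    isSymm_minkowskiBilin.eq x y
  calc
    _ ↔ ∃ x ∈ hyperboloid d, x ∈ (minkowskiBilin d).orthogonal (span ℝ {e, f}) := by
      simp only [mem_orthogonal_span_pair_iff, minkowskiBilin_apply, hyperboloid,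
        Set.mem_ofPred_eq, and_assoc, hcomm e, hcomm f]
    _ ↔ ((minkowskiBilin d).restrict (span ℝ {e, f})).toQuadraticMap.PosDef :=
      exists_mem_hyperboloid_mem_orthogonal_iff _
    _ ↔ minkowskiForm d e f ^ 2 < 1 := by
      simp [posDef_restrict_span_pair_iff isSymm_minkowskiBilin hef, he, hf]
    _ ↔ |minkowskiForm d e f| < 1 := sq_lt_one_iff_abs_lt_one _
end

section
/- Let d ≥ 2 and let B be the Minkowski bilinear form on ℝ^{d+1}. Let e, f ∈ ℝ^{d+1} be linearly independent with B(e,e) = 1, B(f,f) = 1 and |B(e,f)| = 1. Then there exists a nonzero vector u ∈ ℝ^{d+1} with B(u,u) = 0, B(u,e) = 0 and B(u,f) = 0, and there is no vector x with B(x,x) < 0, B(x,e) = 0 and B(x,f) = 0. -/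
/-! For unit vectors `e`, `f` with `B e f = ±1`, the component `e - B e f • f` of `e` orthogonal to
`f` has square `1 - (B e f)² = 0`, so it is light-like, and it is orthogonal to the whole plane
spanned by `e` and `f`. A time-like vector orthogonal to `e` and `f` would be orthogonal to this
nonzero light-like vector, whereas the orthogonal complement of a time-like vector is positive
definite, by the Cauchy–Schwarz inequality for the space coordinates. -/

open LinearMap (BilinForm)

section BilinForm

variable {R V : Type*} [CommRing R] [AddCommGroup V] [Module R V] {B : BilinForm R V} {e f x : V}

theorem sub_smul_ne_zero_of_linearIndependent_pair [Nontrivial R]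
    (hef : LinearIndependent R ![e, f]) (c : R) : e - c • f ≠ 0 := fun h ↦
  one_ne_zero (LinearIndependent.pair_iff.mp hef 1 (-c)
    (by rw [one_smul, neg_smul, ← sub_eq_add_neg, h])).1

theorem bilinForm_apply_sub_smul_eq_zero (hxe : B x e = 0) (hxf : B x f = 0) (c : R) :
    B x (e - c • f) = 0 := by
  rw [map_sub, map_smul, hxe, hxf, smul_zero, sub_zero]

theorem bilinForm_sub_smul_apply_right (hf : B f f = 1) : B (e - B e f • f) f = 0 := by
  rw [BilinForm.sub_left, BilinForm.smul_left, hf, mul_one, sub_self]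

theorem bilinForm_sub_smul_apply_left (hB : B.IsSymm) :
    B (e - B e f • f) e = B e e - B e f ^ 2 := by
  rw [BilinForm.sub_left, BilinForm.smul_left, hB.eq f e, sq]

variable [LinearOrder R]

/-- The signature condition of Minkowski space, in any dimension: the orthogonal complement of each
time-like vector is positive definite. Forms without time-like vectors, such as inner products,
are included. -/
def TimelikeComplPosDef (B : BilinForm R V) : Prop :=
  ∀ ⦃x : V⦄, B x x < 0 → ∀ ⦃u : V⦄, B x u = 0 → u ≠ 0 → 0 < B u u

theorem hyperplanes_parallel_general [IsStrictOrderedRing R] (hB : B.IsSymm)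
    (hpos : TimelikeComplPosDef B) (hef : LinearIndependent R ![e, f])
    (he : B e e = 1) (hf : B f f = 1) (hefval : |B e f| = 1) :
    (∃ u : V, u ≠ 0 ∧ B u u = 0 ∧ B u e = 0 ∧ B u f = 0) ∧
    ¬ ∃ x : V, B x x < 0 ∧ B x e = 0 ∧ B x f = 0 := by
  let u := e - B e f • f
  have hu : u ≠ 0 := sub_smul_ne_zero_of_linearIndependent_pair hef _
  have hue : B u e = 0 := by
    rw [bilinForm_sub_smul_apply_left hB, he, ← sq_abs, hefval, one_pow, sub_self]
  have huf : B u f = 0 := bilinForm_sub_smul_apply_right hf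
  have huu : B u u = 0 := bilinForm_apply_sub_smul_eq_zero hue huf _
  refine ⟨⟨u, hu, huu, hue, huf⟩, ?_⟩
  rintro ⟨x, hx, hxe, hxf⟩
  have hxu : B x u = 0 := bilinForm_apply_sub_smul_eq_zero hxe hxf _
  exact (hpos hx hxu hu).ne' huu

end BilinForm

/-- The Minkowski form `minkowskiForm d` bundled as a bilinear form; the two agree
definitionally. -/
def minkowskiBilinForm (d : ℕ) : BilinForm ℝ (Fin (d + 1) → ℝ) :=
  LinearMap.mk₂ ℝ (minkowskiForm d)
    (fun x x' y ↦ by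
      simp only [minkowskiForm, Pi.add_apply, add_mul, Finset.sum_add_distrib]; ring)
    (fun c x y ↦ by
      simp only [minkowskiForm, Pi.smul_apply, smul_eq_mul, mul_sub, Finset.mul_sum, mul_assoc])
    (fun x y y' ↦ by
      simp only [minkowskiForm, Pi.add_apply, mul_add, Finset.sum_add_distrib]; ring)
    (fun c x y ↦ by
      simp only [minkowskiForm, Pi.smul_apply, smul_eq_mul, mul_sub, Finset.mul_sum,
        mul_left_comm _ c])

theorem minkowskiBilinForm_isSymm (d : ℕ) : (minkowskiBilinForm d).IsSymm :=
  ⟨fun x y ↦ show minkowskiForm d x y = minkowskiForm d y x by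
    simp only [minkowskiForm, mul_comm]⟩

theorem minkowskiForm_self (d : ℕ) (x : Fin (d + 1) → ℝ) :
    minkowskiForm d x x = ∑ i : Fin d, x i.castSucc ^ 2 - x (Fin.last d) ^ 2 := by
  simp only [minkowskiForm, sq]

theorem eq_zero_of_minkowskiForm_self_nonpos_of_last_eq_zero {d : ℕ} {u : Fin (d + 1) → ℝ}
    (hu : minkowskiForm d u u ≤ 0) (hlast : u (Fin.last d) = 0) : u = 0 := by
  rw [minkowskiForm_self, hlast, zero_pow two_ne_zero, sub_zero] at hu
  have hsum : ∑ i : Fin d, u i.castSucc ^ 2 = 0 :=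
    hu.antisymm (Finset.sum_nonneg fun i _ ↦ sq_nonneg _)
  rw [Finset.sum_eq_zero_iff_of_nonneg fun i _ ↦ sq_nonneg _] at hsum
  funext i
  cases i using Fin.lastCases with
  | last => exact hlast
  | cast j => exact sq_eq_zero_iff.mp (hsum j (Finset.mem_univ j))

theorem last_eq_zero_of_minkowskiForm_timelike_orthogonal {d : ℕ} {x u : Fin (d + 1) → ℝ}
    (hx : minkowskiForm d x x < 0) (hxu : minkowskiForm d x u = 0)
    (hu : minkowskiForm d u u ≤ 0) : u (Fin.last d) = 0 := by
  rw [minkowskiForm_self, sub_neg] at hx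
  rw [minkowskiForm_self, sub_nonpos] at hu
  by_contra hlast
  refine lt_irrefl (x (Fin.last d) ^ 2 * u (Fin.last d) ^ 2) ?_
  calc x (Fin.last d) ^ 2 * u (Fin.last d) ^ 2
      = (∑ i : Fin d, x i.castSucc * u i.castSucc) ^ 2 := by
        rw [← mul_pow, ← sub_eq_zero.mp hxu]
    _ ≤ (∑ i : Fin d, x i.castSucc ^ 2) * ∑ i : Fin d, u i.castSucc ^ 2 :=
        Finset.sum_mul_sq_le_sq_mul_sq _ _ _
    _ ≤ (∑ i : Fin d, x i.castSucc ^ 2) * u (Fin.last d) ^ 2 := by gcongr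
    _ < x (Fin.last d) ^ 2 * u (Fin.last d) ^ 2 := by gcongr

theorem minkowskiBilinForm_timelikeComplPosDef (d : ℕ) :
    TimelikeComplPosDef (minkowskiBilinForm d) := by
  intro x hx u hxu
  contrapose!
  exact fun hu ↦ eq_zero_of_minkowskiForm_self_nonpos_of_last_eq_zero hu
    (last_eq_zero_of_minkowskiForm_timelike_orthogonal hx hxu hu)

/-- Parallel hyperplanes: if `|B(e,f)| = 1` then `e` and `f` have a common orthogonal
light-like vector, but no common orthogonal time-like vector. -/
theorem hyperplanes_parallel (d : ℕ) (hd : 2 ≤ d)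
    (e f : Fin (d + 1) → ℝ) (hef : LinearIndependent ℝ ![e, f])
    (he : minkowskiForm d e e = 1) (hf : minkowskiForm d f f = 1)
    (hefval : |minkowskiForm d e f| = 1) :
    (∃ u : Fin (d + 1) → ℝ, u ≠ 0 ∧ minkowskiForm d u u = 0 ∧
      minkowskiForm d u e = 0 ∧ minkowskiForm d u f = 0) ∧
    ¬ ∃ x : Fin (d + 1) → ℝ, minkowskiForm d x x < 0 ∧
      minkowskiForm d x e = 0 ∧ minkowskiForm d x f = 0 :=
  hyperplanes_parallel_general (minkowskiBilinForm_isSymm d)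
    (minkowskiBilinForm_timelikeComplPosDef d) hef he hf hefval
end
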